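/- arXiv:1205.1920 — 3 statements merged into one kernel-verified Lean document; each statement's English description precedes it below -/
import Mathlib

section
/- Efficient information in a reparametrized model (Theorem 3.1, formula (3.7)): Under the same hypotheses (i)–(vi) as in the efficient-score identity of Theorem 3.1 (normalization, score identity for ℓ̇₂, mean-zero profile score ℓ̇*, stationarity with interchange, differentiation under the integral, and invertibility of G₂₂ := Σ_{s=1}^S w_s E_{s,0}[ℓ̇₂ᶜ ℓ̇₂ᶜᵀ]), and assuming additionally that all entries of ℓ̇₁ᶜ and ℓ̇₂ᶜ are square-integrable with respect to each p_{s,0} dμ_s, the matrix I* := Σ_{s=1}^S w_s E_{s,0}[ℓ̇*(s, ·) ℓ̇*(s, ·)ᵀ] satisfies I* = G₁₁ − G₁₂ G₂₂⁻¹ G₂₁, where G₁₁ := Σ_{s=1}^S w_s E_{s,0}[ℓ̇₁ᶜ ℓ̇₁ᶜᵀ] ∈ ℝ^{m×m}, G₁₂ := Σ_{s=1}^S w_s E_{s,0}[ℓ̇₁ᶜ ℓ̇₂ᶜᵀ] ∈ ℝ^{m×k}, and G₂₁ = G₁₂ᵀ. -/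
open MeasureTheory

lemma aux_meas_deriv {X : Type} [MeasurableSpace X] (F : X → ℝ → ℝ) (g : X → ℝ) (t : ℝ)
    (hF : ∀ b, Measurable fun x => F x b) (h : ∀ x, HasDerivAt (F x) (g x) t) :
    Measurable g := by
  have hu : Filter.Tendsto (fun n : ℕ => t + 1 / ((n : ℝ) + 1)) Filter.atTop
      (nhdsWithin t {t}ᶜ) := by
    rw [tendsto_nhdsWithin_iff]
    constructor
    · have := (tendsto_one_div_add_atTop_nhds_zero_nat (𝕜 := ℝ)).const_add t
      simpa using this
    · refine Filter.Eventually.of_forall fun n => ?_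
      have : (0 : ℝ) < 1 / ((n : ℝ) + 1) := by positivity
      simp only [Set.mem_compl_iff, Set.mem_singleton_iff]
      linarith
  refine measurable_of_tendsto_metrizable
    (f := fun (n : ℕ) x => slope (F x) t (t + 1 / ((n : ℝ) + 1))) ?_ ?_
  · intro n
    simp only [slope_def_field]
    exact ((hF _).sub (hF _)).div_const _
  · rw [tendsto_pi_nhds]
    intro x
    exact (hasDerivAt_iff_tendsto_slope.mp (h x)).comp hu

lemma aux_prod {X : Type} [MeasurableSpace X] {μ : Measure X} {f g p : X → ℝ}
    (hf : Measurable f) (hg : Measurable g) (hp : Measurable p) (hp0 : ∀ x, 0 < p x)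
    (hf2 : Integrable (fun x => f x ^ 2 * p x) μ) (hg2 : Integrable (fun x => g x ^ 2 * p x) μ) :
    Integrable (fun x => f x * g x * p x) μ := by
  refine (hf2.add hg2).mono' ((hf.mul hg).mul hp).aestronglyMeasurable
    (Filter.Eventually.of_forall fun x => ?_)
  simp only [Pi.add_apply, norm_mul, Real.norm_eq_abs, abs_of_pos (hp0 x)]
  rw [← add_mul]
  refine mul_le_mul_of_nonneg_right ?_ (hp0 x).le
  nlinarith [sq_nonneg (|f x| - |g x|), sq_abs (f x), sq_abs (g x), sq_nonneg (f x),
    sq_nonneg (g x)]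

lemma aux_int {X : Type} [MeasurableSpace X] {μ : Measure X} {f p : X → ℝ} {c : ℝ}
    (hf : Measurable f) (hp : Measurable p) (hp0 : ∀ x, 0 < p x)
    (hpi : Integrable p μ)
    (hf2 : Integrable (fun x => (f x - c) ^ 2 * p x) μ) :
    Integrable (fun x => f x * p x) μ := by
  have h1 : Integrable (fun x => (f x - c) * 1 * p x) μ :=
    aux_prod (hf.sub_const c) measurable_const hp hp0 hf2 (by simpa using hpi)
  have h2 := h1.add (hpi.const_mul c)
  refine h2.congr (Filter.Eventually.of_forall fun x => ?_)
  simp only [Pi.add_apply]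
  ring

lemma aux_zero {X : Type} [MeasurableSpace X] {μ : Measure X} {f p : X → ℝ} {c : ℝ}
    (hp : Measurable p) (hp0 : ∀ x, 0 < p x)
    (hc : c = ∫ x, f x * p x ∂μ) (hpi : ¬ Integrable p μ)
    (hf2 : Integrable (fun x => (f x - c) ^ 2 * p x) μ) : c = 0 := by
  by_contra hne
  have hfi : Integrable (fun x => f x * p x) μ := by
    by_contra hn
    exact hne (hc.trans (integral_undef hn))
  apply hpi
  have hc2 : 0 < c ^ 2 := by positivity
  have hdom := ((hfi.norm.const_mul (2 * |c|)).add hf2).const_mul (c ^ 2)⁻¹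
  refine hdom.mono' hp.aestronglyMeasurable (Filter.Eventually.of_forall fun x => ?_)
  simp only [Pi.add_apply, norm_mul, Real.norm_eq_abs, abs_of_pos (hp0 x)]
  rw [inv_mul_eq_div, le_div_iff₀ hc2]
  have h1 : c ^ 2 ≤ 2 * (|c| * |f x|) + (f x - c) ^ 2 := by
    rw [← abs_mul]
    nlinarith [le_abs_self (c * f x), sq_nonneg (f x)]
  nlinarith [mul_le_mul_of_nonneg_right h1 (hp0 x).le]

lemma aux_chain {m k : ℕ} (P : (Fin m → ℝ) → (Fin k → ℝ) → ℝ)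
    (hpos : ∀ β q, 0 < P β q)
    (hs : ContDiff ℝ 2 fun bq : (Fin m → ℝ) × (Fin k → ℝ) => P bq.1 bq.2)
    (qmap : (Fin m → ℝ) → Fin k → ℝ) (hqmap : ContDiff ℝ 1 qmap)
    (β₀ : Fin m → ℝ) (i : Fin m) (l1 ls : ℝ) (l2 : Fin k → ℝ)
    (h1 : HasDerivAt (fun b => Real.log (P (Function.update β₀ i b) (qmap β₀))) l1 (β₀ i))
    (h2 : ∀ j, HasDerivAt (fun c => Real.log (P β₀ (Function.update (qmap β₀) j c)))
      (l2 j) (qmap β₀ j))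
    (h3 : HasDerivAt (fun b => Real.log (P (Function.update β₀ i b)
      (qmap (Function.update β₀ i b)))) ls (β₀ i)) :
    ls = l1 + ∑ j, l2 j * fderiv ℝ qmap β₀ (Pi.single i 1) j := by
  set L := fun bq : (Fin m → ℝ) × (Fin k → ℝ) => Real.log (P bq.1 bq.2) with hL
  have hd : DifferentiableAt ℝ L (β₀, qmap β₀) :=
    ((hs.differentiable (by norm_num)) _).log (hpos _ _).ne'
  set F := fderiv ℝ L (β₀, qmap β₀) with hF
  have hdF : HasFDerivAt L F (β₀, qmap β₀) := hd.hasFDerivAt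
  have hub : HasDerivAt (Function.update β₀ i) (Pi.single i (1 : ℝ)) (β₀ i) :=
    hasDerivAt_update β₀ i (β₀ i)
  have hq : HasFDerivAt qmap (fderiv ℝ qmap β₀) (Function.update β₀ i (β₀ i)) := by
    rw [Function.update_eq_self]
    exact ((hqmap.differentiable (by norm_num)) _).hasFDerivAt
  have hqb := hq.comp_hasDerivAt (β₀ i) hub
  have e1 : l1 = F (Pi.single i 1, 0) := by
    have := HasFDerivAt.comp_hasDerivAt (l := L) (l' := F)
      (f := fun b => (Function.update β₀ i b, qmap β₀)) (β₀ i)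
      (by simpa using hdF) (hub.prodMk (hasDerivAt_const _ _))
    exact h1.unique this
  have e2 : ∀ j, l2 j = F (0, Pi.single j 1) := by
    intro j
    have := HasFDerivAt.comp_hasDerivAt (l := L) (l' := F)
      (f := fun b => (β₀, Function.update (qmap β₀) j b)) (qmap β₀ j)
      (by simpa using hdF) ((hasDerivAt_const _ _).prodMk (hasDerivAt_update _ j _))
    exact (h2 j).unique this
  have e3 : ls = F (Pi.single i 1, fderiv ℝ qmap β₀ (Pi.single i 1)) := by
    have := HasFDerivAt.comp_hasDerivAt (l := L) (l' := F)
      (f := fun b => (Function.update β₀ i b, qmap (Function.update β₀ i b))) (β₀ i)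
      (by simpa using hdF) (hub.prodMk hqb)
    exact h3.unique this
  set a := fderiv ℝ qmap β₀ (Pi.single i 1) with ha
  have e4 : F (0, a) = ∑ j, l2 j * a j := by
    have hlin : (0, a) = ∑ j, a j • ((0 : Fin m → ℝ), (Pi.single j (1 : ℝ) : Fin k → ℝ)) := by
      refine Prod.ext ?_ ?_
      · simp [Prod.fst_sum]
      · rw [Prod.snd_sum]
        ext j
        simp [Finset.sum_apply, Pi.single_apply]
    rw [hlin, map_sum]
    refine Finset.sum_congr rfl fun j _ => ?_
    rw [map_smul, ← e2, smul_eq_mul, mul_comm]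
  rw [e3, e1, ← e4, ← map_add]
  simp

/-- Efficient information in a reparametrized model (Theorem 3.1, formula (3.7)). -/
theorem stmt_3
    (S m k : ℕ) (hS : 0 < S)
    (X : Fin S → Type) [∀ s, MeasurableSpace (X s)]
    (μ : ∀ s, Measure (X s)) [∀ s, SigmaFinite (μ s)]
    (w : Fin S → ℝ) (hw_pos : ∀ s, 0 < w s) (hw_sum : ∑ s, w s = 1)
    (Θβ : Set (Fin m → ℝ)) (hΘβ : IsOpen Θβ)
    (Dq : Set (Fin k → ℝ)) (hDq : IsOpen Dq)
    (β₀ : Fin m → ℝ) (hβ₀ : β₀ ∈ Θβ)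
    (q₀ : Fin k → ℝ) (hq₀ : q₀ ∈ Dq)
    -- the reparametrized model: positive, measurable in x, C² in (β, q)
    (pstar : ∀ s : Fin S, X s → (Fin m → ℝ) → (Fin k → ℝ) → ℝ)
    (hpos : ∀ s x β q, 0 < pstar s x β q)
    (hmeas : ∀ s β q, Measurable fun x => pstar s x β q)
    (hsmooth : ∀ s x, ContDiff ℝ 2 fun bq : (Fin m → ℝ) × (Fin k → ℝ) => pstar s x bq.1 bq.2)
    -- the C¹ map β ↦ q_β with q_{β₀} = q₀
    (qmap : (Fin m → ℝ) → Fin k → ℝ) (hqmap : ContDiff ℝ 1 qmap)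
    (hqmap0 : qmap β₀ = q₀) (hqmap_mem : ∀ β ∈ Θβ, qmap β ∈ Dq)
    -- true densities
    (p0 : ∀ s : Fin S, X s → ℝ) (hp0 : ∀ s x, p0 s x = pstar s x β₀ q₀)
    -- score function for β : ℓ̇₁(s,x;β,q) = ∂_β log p*_s(x;β,q)
    (ℓ1 : ∀ s : Fin S, X s → (Fin m → ℝ) → (Fin k → ℝ) → Fin m → ℝ)
    (hℓ1 : ∀ s x β q i, HasDerivAt (fun b => Real.log (pstar s x (Function.update β i b) q))
      (ℓ1 s x β q i) (β i))
    -- score function for q : ℓ̇₂(s,x;β,q) = ∂_q log p*_s(x;β,q)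
    (ℓ2 : ∀ s : Fin S, X s → (Fin m → ℝ) → (Fin k → ℝ) → Fin k → ℝ)
    (hℓ2 : ∀ s x β q j, HasDerivAt (fun c => Real.log (pstar s x β (Function.update q j c)))
      (ℓ2 s x β q j) (q j))
    -- profile (efficient) score ℓ̇*(s,x) = ∂_β|_{β₀} log p*_s(x;β,q_β)
    (lstar : ∀ s : Fin S, X s → Fin m → ℝ)
    (hlstar : ∀ s x i, HasDerivAt
      (fun b => Real.log (pstar s x (Function.update β₀ i b) (qmap (Function.update β₀ i b))))
      (lstar s x i) (β₀ i))
    -- ∂_β|_{β₀} ℓ̇₂(s,x;β,q_β)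
    (Dl2 : ∀ s : Fin S, X s → Fin k → Fin m → ℝ)
    (hDl2 : ∀ s x j i, HasDerivAt
      (fun b => ℓ2 s x (Function.update β₀ i b) (qmap (Function.update β₀ i b)) j)
      (Dl2 s x j i) (β₀ i))
    -- (i) normalization
    (hi : ∀ β ∈ Θβ, ∀ q ∈ Dq, ∑ s, w s * ∫ x, pstar s x β q ∂μ s = 1)
    -- (ii) score identity for ℓ̇₂
    (hii : ∀ β ∈ Θβ, ∀ q ∈ Dq, ∀ j,
      ∑ s, w s * ∫ x, ℓ2 s x β q j * pstar s x β q ∂μ s = 0)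
    -- (iii) the profile score has mean zero under each true density
    (hiii : ∀ s i, ∫ x, lstar s x i * p0 s x ∂μ s = 0)
    -- (iv) stationarity with interchange
    (hiv1 : ∀ j i, HasDerivAt
      (fun b => ∑ s, w s * ∫ x,
        ℓ2 s x (Function.update β₀ i b) (qmap (Function.update β₀ i b)) j * p0 s x ∂μ s)
      (∑ s, w s * ∫ x, Dl2 s x j i * p0 s x ∂μ s) (β₀ i))
    (hiv2 : ∀ j i, ∑ s, w s * ∫ x, Dl2 s x j i * p0 s x ∂μ s = 0)
    -- (v) differentiation under the integral sign
    (hv : ∀ j i, HasDerivAt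
      (fun b => ∑ s, w s * ∫ x,
        ℓ2 s x (Function.update β₀ i b) (qmap (Function.update β₀ i b)) j *
          pstar s x (Function.update β₀ i b) (qmap (Function.update β₀ i b)) ∂μ s)
      ((∑ s, w s * ∫ x, Dl2 s x j i * p0 s x ∂μ s) +
        ∑ s, w s * ∫ x, ℓ2 s x β₀ q₀ j * lstar s x i * p0 s x ∂μ s) (β₀ i))
    -- centered scores
    (ℓ1c : ∀ s : Fin S, X s → Fin m → ℝ)
    (hℓ1c : ∀ s x i, ℓ1c s x i = ℓ1 s x β₀ q₀ i - ∫ y, ℓ1 s y β₀ q₀ i * p0 s y ∂μ s)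
    (ℓ2c : ∀ s : Fin S, X s → Fin k → ℝ)
    (hℓ2c : ∀ s x j, ℓ2c s x j = ℓ2 s x β₀ q₀ j - ∫ y, ℓ2 s y β₀ q₀ j * p0 s y ∂μ s)
    -- (vi) invertibility of G₂₂
    (G22 : Matrix (Fin k) (Fin k) ℝ)
    (hG22 : ∀ j j', G22 j j' = ∑ s, w s * ∫ x, ℓ2c s x j * ℓ2c s x j' * p0 s x ∂μ s)
    (hG22_inv : IsUnit G22.det)
    (G12 : Matrix (Fin m) (Fin k) ℝ)
    (hG12 : ∀ i j, G12 i j = ∑ s, w s * ∫ x, ℓ1c s x i * ℓ2c s x j * p0 s x ∂μ s)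
    -- square integrability of the centered scores
    (hℓ1c_sq : ∀ s i, Integrable (fun x => (ℓ1c s x i) ^ 2 * p0 s x) (μ s))
    (hℓ2c_sq : ∀ s j, Integrable (fun x => (ℓ2c s x j) ^ 2 * p0 s x) (μ s))
    (G11 : Matrix (Fin m) (Fin m) ℝ)
    (hG11 : ∀ i i', G11 i i' = ∑ s, w s * ∫ x, ℓ1c s x i * ℓ1c s x i' * p0 s x ∂μ s)
    -- efficient information matrix I*
    (Istar : Matrix (Fin m) (Fin m) ℝ)
    (hIstar : ∀ i i', Istar i i' = ∑ s, w s * ∫ x, lstar s x i * lstar s x i' * p0 s x ∂μ s) :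
    Istar = G11 - G12 * G22⁻¹ * G12.transpose := by
  classical
  subst hqmap0
  have hp0' : ∀ s, p0 s = fun x => pstar s x β₀ (qmap β₀) := fun s => funext (hp0 s)
  have hp0m : ∀ s, Measurable (p0 s) := fun s => by rw [hp0']; exact hmeas s _ _
  have hp0p : ∀ s x, 0 < p0 s x := fun s x => by rw [hp0]; exact hpos _ _ _ _
  have m1 : ∀ s i, Measurable fun x => ℓ1 s x β₀ (qmap β₀) i := fun s i =>
    aux_meas_deriv _ _ (β₀ i) (fun b => (hmeas s _ _).log) (fun x => hℓ1 s x β₀ (qmap β₀) i)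
  have m2 : ∀ s j, Measurable fun x => ℓ2 s x β₀ (qmap β₀) j := fun s j =>
    aux_meas_deriv _ _ (qmap β₀ j) (fun b => (hmeas s _ _).log)
      (fun x => hℓ2 s x β₀ (qmap β₀) j)
  have m1c : ∀ s i, Measurable fun x => ℓ1c s x i := fun s i => by
    simp only [hℓ1c]; exact (m1 s i).sub_const _
  have m2c : ∀ s j, Measurable fun x => ℓ2c s x j := fun s j => by
    simp only [hℓ2c]; exact (m2 s j).sub_const _
  obtain ⟨A, hA⟩ : ∃ A : Matrix (Fin k) (Fin m) ℝ, ∀ s x i,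
      lstar s x i = ℓ1 s x β₀ (qmap β₀) i + ∑ j, ℓ2 s x β₀ (qmap β₀) j * A j i :=
    ⟨fun j i => fderiv ℝ qmap β₀ (Pi.single i 1) j, fun s x i =>
      aux_chain (pstar s x) (hpos s x) (hsmooth s x) qmap hqmap β₀ i _ _ _
        (hℓ1 s x _ _ i) (hℓ2 s x _ _) (hlstar s x i)⟩
  -- integrability
  have q1 : ∀ s i, Integrable (fun x => (ℓ1 s x β₀ (qmap β₀) i -
      ∫ y, ℓ1 s y β₀ (qmap β₀) i * p0 s y ∂μ s) ^ 2 * p0 s x) (μ s) := fun s i => by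
    simpa only [hℓ1c] using hℓ1c_sq s i
  have q2 : ∀ s j, Integrable (fun x => (ℓ2 s x β₀ (qmap β₀) j -
      ∫ y, ℓ2 s y β₀ (qmap β₀) j * p0 s y ∂μ s) ^ 2 * p0 s x) (μ s) := fun s j => by
    simpa only [hℓ2c] using hℓ2c_sq s j
  have i1 : ∀ s, Integrable (p0 s) (μ s) → ∀ i,
      Integrable (fun x => ℓ1 s x β₀ (qmap β₀) i * p0 s x) (μ s) := fun s h i =>
    aux_int (m1 s i) (hp0m s) (hp0p s) h (q1 s i)
  have i2 : ∀ s, Integrable (p0 s) (μ s) → ∀ j,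
      Integrable (fun x => ℓ2 s x β₀ (qmap β₀) j * p0 s x) (μ s) := fun s h j =>
    aux_int (m2 s j) (hp0m s) (hp0p s) h (q2 s j)
  have z1 : ∀ s, ¬ Integrable (p0 s) (μ s) → ∀ i,
      ∫ y, ℓ1 s y β₀ (qmap β₀) i * p0 s y ∂μ s = 0 := fun s h i =>
    aux_zero (hp0m s) (hp0p s) rfl h (q1 s i)
  have z2 : ∀ s, ¬ Integrable (p0 s) (μ s) → ∀ j,
      ∫ y, ℓ2 s y β₀ (qmap β₀) j * p0 s y ∂μ s = 0 := fun s h j =>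
    aux_zero (hp0m s) (hp0p s) rfl h (q2 s j)
  have hexp : ∀ s x i, lstar s x i * p0 s x = ℓ1 s x β₀ (qmap β₀) i * p0 s x +
      ∑ j, A j i * (ℓ2 s x β₀ (qmap β₀) j * p0 s x) := fun s x i => by
    rw [hA, add_mul, Finset.sum_mul]
    congr 1
    exact Finset.sum_congr rfl fun j _ => by ring
  have ils : ∀ s, Integrable (p0 s) (μ s) → ∀ i,
      Integrable (fun x => lstar s x i * p0 s x) (μ s) := fun s h i => by
    simp only [hexp]
    exact (i1 s h i).add (integrable_finsetSum _ fun j _ => (i2 s h j).const_mul _)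
  have hd : ∀ s i, (∫ y, ℓ1 s y β₀ (qmap β₀) i * p0 s y ∂μ s) +
      ∑ j, (∫ y, ℓ2 s y β₀ (qmap β₀) j * p0 s y ∂μ s) * A j i = 0 := by
    intro s i
    by_cases h : Integrable (p0 s) (μ s)
    · have := hiii s i
      simp only [hexp] at this
      rw [integral_add (i1 s h i) (integrable_finsetSum _ fun j _ => (i2 s h j).const_mul _),
        integral_finsetSum _ fun j _ => (i2 s h j).const_mul _] at this
      simp only [integral_const_mul] at this
      rw [← this]
      congr 1
      exact Finset.sum_congr rfl fun j _ => by ring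
    · simp [z1 s h, z2 s h]
  have hls : ∀ s x i, lstar s x i = ℓ1c s x i + ∑ j, A j i * ℓ2c s x j := by
    intro s x i
    have e : ∑ j, A j i * ℓ2c s x j = ∑ j, ℓ2 s x β₀ (qmap β₀) j * A j i -
        ∑ j, (∫ y, ℓ2 s y β₀ (qmap β₀) j * p0 s y ∂μ s) * A j i := by
      rw [← Finset.sum_sub_distrib]
      exact Finset.sum_congr rfl fun j _ => by rw [hℓ2c]; ring
    rw [e, hℓ1c, hA]
    linarith [hd s i]
  have j11 : ∀ s i i', Integrable (fun x => ℓ1c s x i * ℓ1c s x i' * p0 s x) (μ s) :=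
    fun s i i' => aux_prod (m1c s i) (m1c s i') (hp0m s) (hp0p s) (hℓ1c_sq s i) (hℓ1c_sq s i')
  have j12 : ∀ s i j, Integrable (fun x => ℓ1c s x i * ℓ2c s x j * p0 s x) (μ s) :=
    fun s i i' => aux_prod (m1c s i) (m2c s i') (hp0m s) (hp0p s) (hℓ1c_sq s i) (hℓ2c_sq s i')
  have j22 : ∀ s i j, Integrable (fun x => ℓ2c s x i * ℓ2c s x j * p0 s x) (μ s) :=
    fun s i i' => aux_prod (m2c s i) (m2c s i') (hp0m s) (hp0p s) (hℓ2c_sq s i) (hℓ2c_sq s i')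
  have E1 : ∀ s i i' x, ℓ1c s x i * lstar s x i' * p0 s x = ℓ1c s x i * ℓ1c s x i' * p0 s x +
      ∑ j, A j i' * (ℓ1c s x i * ℓ2c s x j * p0 s x) := fun s i i' x => by
    rw [hls s x i', mul_add, add_mul, Finset.mul_sum, Finset.sum_mul]
    congr 1
    exact Finset.sum_congr rfl fun j _ => by ring
  have E2 : ∀ s j i x, ℓ2c s x j * lstar s x i * p0 s x = ℓ1c s x i * ℓ2c s x j * p0 s x +
      ∑ j', A j' i * (ℓ2c s x j * ℓ2c s x j' * p0 s x) := fun s j i x => by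
    rw [hls s x i, mul_add, add_mul, Finset.mul_sum, Finset.sum_mul]
    congr 1
    · ring
    exact Finset.sum_congr rfl fun j _ => by ring
  have E3 : ∀ s i i' x, lstar s x i * lstar s x i' * p0 s x = ℓ1c s x i * lstar s x i' * p0 s x +
      ∑ j, A j i * (ℓ2c s x j * lstar s x i' * p0 s x) := fun s i i' x => by
    rw [hls s x i, add_mul, add_mul, Finset.sum_mul, Finset.sum_mul]
    congr 1
    exact Finset.sum_congr rfl fun j _ => by ring
  have k1 : ∀ s i i', Integrable (fun x => ℓ1c s x i * lstar s x i' * p0 s x) (μ s) :=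
    fun s i i' => by
      simp only [E1]
      exact (j11 s i i').add (integrable_finsetSum _ fun j _ => (j12 s i j).const_mul _)
  have k2 : ∀ s j i, Integrable (fun x => ℓ2c s x j * lstar s x i * p0 s x) (μ s) :=
    fun s j i => by
      simp only [E2]
      exact (j12 s i j).add (integrable_finsetSum _ fun j' _ => (j22 s j j').const_mul _)
  -- orthogonality
  have orth : ∀ j i, ∑ s, w s * ∫ x, ℓ2c s x j * lstar s x i * p0 s x ∂μ s = 0 := by
    intro j i
    have hz := hv j i
    rw [hiv2, zero_add] at hz
    have hev : (fun b => ∑ s, w s * ∫ x,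
        ℓ2 s x (Function.update β₀ i b) (qmap (Function.update β₀ i b)) j *
          pstar s x (Function.update β₀ i b) (qmap (Function.update β₀ i b)) ∂μ s)
        =ᶠ[nhds (β₀ i)] fun _ => (0 : ℝ) := by
      have hcont : ContinuousAt (Function.update β₀ i) (β₀ i) :=
        (hasDerivAt_update β₀ i (β₀ i)).continuousAt
      have hmem : Θβ ∈ nhds (Function.update β₀ i (β₀ i)) := by
        rw [Function.update_eq_self]; exact hΘβ.mem_nhds hβ₀
      filter_upwards [hcont hmem] with b hb
      exact hii _ hb _ (hqmap_mem _ hb) j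
    have h0 := hz.unique ((hasDerivAt_const (β₀ i) (0 : ℝ)).congr_of_eventuallyEq hev)
    rw [← h0]
    refine Finset.sum_congr rfl fun s _ => ?_
    congr 1
    by_cases h : Integrable (p0 s) (μ s)
    · have e : ∀ x, ℓ2 s x β₀ (qmap β₀) j * lstar s x i * p0 s x =
          ℓ2c s x j * lstar s x i * p0 s x +
          (∫ y, ℓ2 s y β₀ (qmap β₀) j * p0 s y ∂μ s) * (lstar s x i * p0 s x) := fun x => by
        rw [hℓ2c]; ring
      simp only [e]
      rw [integral_add (k2 s j i) ((ils s h i).const_mul _), integral_const_mul, hiii, mul_zero,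
        add_zero]
    · simp only [hℓ2c, z2 s h, sub_zero]
  have M1 : G12.transpose + G22 * A = 0 := by
    ext j i
    rw [Matrix.add_apply, Matrix.transpose_apply, Matrix.mul_apply, Matrix.zero_apply,
      ← orth j i, hG12]
    simp only [hG22, Finset.sum_mul]
    rw [Finset.sum_comm, ← Finset.sum_add_distrib]
    refine Finset.sum_congr rfl fun s _ => ?_
    simp only [E2]
    rw [integral_add (j12 s i j) (integrable_finsetSum _ fun j' _ => (j22 s j j').const_mul _),
      integral_finsetSum _ fun j' _ => (j22 s j j').const_mul _]
    simp only [integral_const_mul]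
    rw [mul_add, Finset.mul_sum]
    congr 1
    exact Finset.sum_congr rfl fun j _ => by ring
  have M2 : Istar = G11 + G12 * A := by
    ext i i'
    have s1 : Istar i i' = (∑ s, w s * ∫ x, ℓ1c s x i * lstar s x i' * p0 s x ∂μ s) +
        ∑ j, A j i * ∑ s, w s * ∫ x, ℓ2c s x j * lstar s x i' * p0 s x ∂μ s := by
      rw [hIstar]
      simp only [Finset.mul_sum]
      rw [Finset.sum_comm, ← Finset.sum_add_distrib]
      refine Finset.sum_congr rfl fun s _ => ?_
      simp only [E3]
      rw [integral_add (k1 s i i') (integrable_finsetSum _ fun j _ => (k2 s j i').const_mul _),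
        integral_finsetSum _ fun j _ => (k2 s j i').const_mul _]
      simp only [integral_const_mul]
      rw [mul_add, Finset.mul_sum]
      congr 1
      exact Finset.sum_congr rfl fun j _ => by ring
    rw [s1]
    simp only [orth, mul_zero, Finset.sum_const_zero, add_zero]
    rw [Matrix.add_apply, Matrix.mul_apply, hG11]
    simp only [hG12, Finset.sum_mul]
    rw [Finset.sum_comm, ← Finset.sum_add_distrib]
    refine Finset.sum_congr rfl fun s _ => ?_
    simp only [E1]
    rw [integral_add (j11 s i i') (integrable_finsetSum _ fun j _ => (j12 s i j).const_mul _),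
      integral_finsetSum _ fun j _ => (j12 s i j).const_mul _]
    simp only [integral_const_mul]
    rw [mul_add, Finset.mul_sum]
    congr 1
    exact Finset.sum_congr rfl fun j _ => by ring
  have M3 : A = -(G22⁻¹ * G12.transpose) := by
    have : G22 * A = -G12.transpose := by
      rw [eq_neg_iff_add_eq_zero, add_comm]; exact M1
    rw [← Matrix.mul_neg, ← this, ← Matrix.mul_assoc, Matrix.nonsing_inv_mul _ hG22_inv,
      Matrix.one_mul]
  rw [M2, M3, Matrix.mul_neg, ← sub_eq_add_neg, Matrix.mul_assoc]
end

section
/- Stationarity of the profile plug-in ĝ_θ in stratified sampling (Lemma 2.1 / Appendix B): Fix θ and suppose there exist positive reals Q̂_1(θ),…,Q̂_S(θ) such that, with ĝ_θ(x) := f*₀(x) / ( Σ_{s'=1}^S w_{s'} Q_{s'|X}(x; θ) / Q̂_{s'}(θ) ) (the denominator being strictly positive μ-a.e.), the fixed-point equations Q̂_s(θ) = ∫ Q_{s|X}(x; θ) ĝ_θ(x) dμ(x) hold for s = 1,…,S. Let t ↦ α_t be a path of measurable functions on X with α_0 = 0 and ĝ_θ + α_t ≥ 0, and assume differentiation under the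 integral sign: t ↦ ∫ log(ĝ_θ(x) + α_t(x)) f*₀(x) dμ(x) is differentiable at t = 0 with derivative ∫ (α'_0(x) / ĝ_θ(x)) f*₀(x) dμ(x), and for each s, t ↦ ∫ Q_{s|X}(x; θ)(ĝ_θ(x) + α_t(x)) dμ(x) is differentiable at t = 0 with derivative ∫ Q_{s|X}(x; θ) α'_0(x) dμ(x), where α'_0 := ∂_t α_t |_{t=0}, and both derivatives are finite. Then the derivative at t = 0 of the expected profile log-likelihood t ↦ ∫ log(ĝ_θ(x) + α_t(x)) f*₀(x) dμ(x) − Σ_{s=1}^S w_s log ∫ Q_{s|X}(x; θ)(ĝ_θ(x) + α_t(x)) dμ(x) is zero. -/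
open MeasureTheory

/-- Stationarity of the profile plug-in ĝ_θ in stratified sampling
(Lemma 2.1 / Appendix B). -/
theorem stmt_8
    (S : ℕ) (hS : 0 < S)
    (X : Type) [MeasurableSpace X] (μ : Measure X) [SigmaFinite μ]
    (w : Fin S → ℝ) (hw_pos : ∀ s, 0 < w s) (hw_sum : ∑ s, w s = 1)
    -- the kernels x ↦ Q_{s|X}(x; θ) at the fixed parameter θ
    (Q : Fin S → X → ℝ) (hQ_meas : ∀ s, Measurable (Q s)) (hQ_nonneg : ∀ s x, 0 ≤ Q s x)
    -- the mixture density f*₀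
    (fstar : X → ℝ) (hfstar_meas : Measurable fstar) (hfstar_nonneg : ∀ x, 0 ≤ fstar x)
    -- the profile plug-in: Q̂_s(θ) > 0 and ĝ_θ
    (Qhat : Fin S → ℝ) (hQhat_pos : ∀ s, 0 < Qhat s)
    (ghat : X → ℝ)
    (hghat : ∀ x, ghat x = fstar x / ∑ s, w s * Q s x / Qhat s)
    -- the denominator is strictly positive μ-a.e.
    (hden_pos : ∀ᵐ x ∂μ, 0 < ∑ s, w s * Q s x / Qhat s)
    -- the fixed-point equations
    (hfix : ∀ s, Qhat s = ∫ x, Q s x * ghat x ∂μ)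
    -- a path of perturbations with α₀ = 0, ĝ_θ + α_t ≥ 0, and t-derivative α'₀ at 0
    (α : ℝ → X → ℝ) (hα0 : ∀ x, α 0 x = 0)
    (hα_nonneg : ∀ t x, 0 ≤ ghat x + α t x)
    (α'0 : X → ℝ) (hα'0 : ∀ x, HasDerivAt (fun t => α t x) (α'0 x) 0)
    -- differentiation under the integral sign
    (hDUI1 : HasDerivAt (fun t => ∫ x, Real.log (ghat x + α t x) * fstar x ∂μ)
      (∫ x, α'0 x / ghat x * fstar x ∂μ) 0)
    (hDUI2 : ∀ s, HasDerivAt (fun t => ∫ x, Q s x * (ghat x + α t x) ∂μ)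
      (∫ x, Q s x * α'0 x ∂μ) 0)
    -- the derivatives under the integrals are finite (the integrands are integrable)
    (hint1 : Integrable (fun x => α'0 x / ghat x * fstar x) μ)
    (hint2 : ∀ s, Integrable (fun x => Q s x * α'0 x) μ) :
    -- the expected profile log-likelihood along the path is stationary at t = 0
    HasDerivAt (fun t =>
      (∫ x, Real.log (ghat x + α t x) * fstar x ∂μ) -
        ∑ s, w s * Real.log (∫ x, Q s x * (ghat x + α t x) ∂μ)) 0 0 := by
  have hz : ∀ x, ghat x = 0 → α'0 x = 0 := by
    intro x hx
    have hmin : IsLocalMin (fun t => α t x) 0 := by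
      refine Filter.Eventually.of_forall fun t => ?_
      have := hα_nonneg t x
      simp only [hα0 x]
      linarith
    exact hmin.hasDerivAt_eq_zero (hα'0 x)
  have hae : (fun x => α'0 x / ghat x * fstar x) =ᵐ[μ]
      fun x => ∑ s, w s / Qhat s * (Q s x * α'0 x) := by
    filter_upwards [hden_pos] with x hx
    have e : ∑ s, w s / Qhat s * (Q s x * α'0 x) =
        (∑ s, w s * Q s x / Qhat s) * α'0 x := by
      rw [Finset.sum_mul]
      exact Finset.sum_congr rfl fun s _ => by ring
    rw [e]
    by_cases hg : ghat x = 0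
    · simp [hz x hg]
    · have hf : fstar x = ghat x * ∑ s, w s * Q s x / Qhat s := by
        rw [hghat x, div_mul_cancel₀ _ hx.ne']
      rw [hf]
      field_simp
  have hI : ∫ x, α'0 x / ghat x * fstar x ∂μ =
      ∑ s, w s * ((∫ x, Q s x * α'0 x ∂μ) / Qhat s) := by
    rw [integral_congr_ae hae, integral_finset_sum _ fun s _ => (hint2 s).const_mul _]
    refine Finset.sum_congr rfl fun s _ => ?_
    rw [integral_const_mul]
    ring
  have h0 : ∀ s, ∫ x, Q s x * (ghat x + α 0 x) ∂μ = Qhat s := by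
    intro s
    simp only [hα0, add_zero]
    exact (hfix s).symm
  have hL : ∀ s ∈ Finset.univ, HasDerivAt
      (fun t => w s * Real.log (∫ x, Q s x * (ghat x + α t x) ∂μ))
      (w s * ((∫ x, Q s x * α'0 x ∂μ) / Qhat s)) 0 := by
    intro s _
    have h := (hDUI2 s).log (by rw [h0 s]; exact (hQhat_pos s).ne')
    rw [h0 s] at h
    exact h.const_mul _
  have h := hDUI1.sub (HasDerivAt.fun_sum hL)
  rw [hI, sub_self] at h
  exact h
end

section
/- Non-identifiability of (α, ρ₁) in the reparametrized logistic model (Section 4): With p*_s(x; α, β, ρ₁) := ρ_s f(s|x; α, β) f*₀(x) / ( w₀ Q_{0|X}(x; α, β) + w₁ ρ₁ Q_{1|X}(x; α, β) ) for s ∈ {0, 1}, where ρ₀ := 1, f(y|x; α, β) := exp(y(α + xᵀβ))/(1 + exp(α + xᵀβ)) and Q_{s|X}(x; α, β) := f(s|x; α, β), the parameters α and ρ₁ enter only through α* := α + log ρ₁: for all x ∈ ℝ², α ∈ ℝ, β ∈ ℝ², ρ₁ > 0 and s ∈ {0, 1}, p*_s(x; α, β, ρ₁) = p*_s(x; α +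 log ρ₁, β, 1). -/
open MeasureTheory

/-- Non-identifiability of (α, ρ₁) in the reparametrized logistic model (Section 4):
the parameters α and ρ₁ enter only through α* = α + log ρ₁. -/
theorem stmt_13
    (w0 w1 : ℝ) (hw0 : 0 < w0) (hw1 : 0 < w1) (hw : w0 + w1 = 1)
    (β : Fin 2 → ℝ)
    -- an arbitrary nonnegative f*₀
    (fstar : (Fin 2 → ℝ) → ℝ) (hfstar : ∀ x, 0 ≤ fstar x)
    -- the logistic conditional density f(y|x; α, β), as a function of α
    (f : ℝ → Fin 2 → (Fin 2 → ℝ) → ℝ)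
    (hf : ∀ a y x, f a y x =
      Real.exp ((y : ℕ) * (a + ∑ i, x i * β i)) / (1 + Real.exp (a + ∑ i, x i * β i)))
    -- Q_{s|X}(x; α, β) = f(s|x; α, β)
    (Q : ℝ → Fin 2 → (Fin 2 → ℝ) → ℝ) (hQ : ∀ a s x, Q a s x = f a s x)
    -- the reparametrized model p*_s(x; α, β, ρ₁), as a function of (α, ρ₁), with ρ₀ = 1
    (pstar : ℝ → ℝ → Fin 2 → (Fin 2 → ℝ) → ℝ)
    (hpstar : ∀ a r s x, pstar a r s x =
      (if s = 0 then (1 : ℝ) else r) * f a s x * fstar x /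
        (w0 * Q a 0 x + w1 * r * Q a 1 x)) :
    ∀ (x : Fin 2 → ℝ) (a : ℝ) (r : ℝ), 0 < r → ∀ s : Fin 2,
      pstar a r s x = pstar (a + Real.log r) 1 s x := by
  intro x a r hr s
  have h0 : ∀ a, f a 0 x = 1 / (1 + Real.exp (a + ∑ i, x i * β i)) := by
    intro a
    rw [hf]
    simp
  have h1 : ∀ a, f a 1 x = Real.exp (a + ∑ i, x i * β i) / (1 + Real.exp (a + ∑ i, x i * β i)) := by
    intro a
    rw [hf]
    simp
  have hE : Real.exp (a + Real.log r + ∑ i, x i * β i) = r * Real.exp (a + ∑ i, x i * β i) := by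
    rw [show a + Real.log r + ∑ i, x i * β i = Real.log r + (a + ∑ i, x i * β i) by ring,
      Real.exp_add, Real.exp_log hr]
  have key : ∀ E ρ : ℝ, 0 < E → 0 < ρ →
      w0 * (1 / (1 + E)) + w1 * ρ * (E / (1 + E)) = (w0 + w1 * ρ * E) / (1 + E) := by
    intro E ρ hE hρ
    ring
  have hp := Real.exp_pos (a + ∑ i, x i * β i)
  rw [hpstar, hpstar]
  simp only [hQ, h0, h1, hE]
  generalize hE0 : Real.exp (a + ∑ i, x i * β i) = E at *
  rw [key E r hp hr, key (r * E) 1 (by positivity) one_pos]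
  have e1 : 1 + E ≠ 0 := by positivity
  have e2 : 1 + r * E ≠ 0 := by positivity
  have e3 : w0 + w1 * r * E ≠ 0 := by positivity
  have e4 : w0 + w1 * 1 * (r * E) = w0 + w1 * r * E := by ring
  rw [e4]
  fin_cases s
  · simp only [Fin.zero_eta, h0, hE, hE0, if_true]
    field_simp
  · simp only [Fin.mk_one, h1, hE, hE0, one_ne_zero, if_false]
    field_simp
end
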